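/- Let d ≥ 3 and let U be an n-element configuration in Z^d. There is a number c = c(d) > 0 such that if C = (C^1, C^2) is a clustering of U with |C^1| ≤ 3, then esc_U(x) ≥ (3 − 2·G_d(o))/G_d(o) − c·n·sep(C)^{2−d} for every x ∈ C^1. -/

import Mathlib

open MeasureTheory

namespace HATFormal

/-- Points of the lattice `ℤ^d`. -/
abbrev Pt (d : ℕ) := Fin d → ℤ

/-- The `2d` unit steps of the simple random walk on `ℤ^d`. -/
def Dir (d : ℕ) : Set (Pt d) :=
  {s | ∃ i : Fin d, s = Pi.single i 1 ∨ s = Pi.single i (-1)}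

/-- The position, after `t` steps, of the walk started at `x` with steps `s`. -/
def wpos (d : ℕ) (x : Pt d) {T : ℕ} (s : Fin T → Pt d) (t : ℕ) : Pt d :=
  x + ∑ i ∈ Finset.univ.filter (fun i : Fin T => (i : ℕ) < t), s i

/-- The probability of an event `P` of the first `T` steps of simple random walk on `ℤ^d`. -/
noncomputable def prob (d T : ℕ) (P : (Fin T → Pt d) → Prop) : ℝ :=
  (Nat.card {s : Fin T → Pt d // (∀ i, s i ∈ Dir d) ∧ P s} : ℝ) / ((2 * d : ℕ) : ℝ) ^ T

open Classical in
/-- `esc d A x = P_x(τ_A = ∞)` if `x ∈ A`, and `0` otherwise. -/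
noncomputable def esc (d : ℕ) (A : Set (Pt d)) (x : Pt d) : ℝ :=
  if x ∈ A then ⨅ T : ℕ, prob d T (fun s => ∀ t, 1 ≤ t → t ≤ T → wpos d x s t ∉ A) else 0

/-- The capacity of `A`. -/
noncomputable def capa (d : ℕ) (A : Set (Pt d)) : ℝ := ∑' x : A, esc d A (x : Pt d)

/-- The harmonic measure `H_A(x) = esc_A(x) / cap_A`. -/
noncomputable def harm (d : ℕ) (A : Set (Pt d)) (x : Pt d) : ℝ := esc d A x / capa d A

/-- `P_x(τ_W < ∞)`. -/
noncomputable def retProb (d : ℕ) (W : Set (Pt d)) (x : Pt d) : ℝ :=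
  ∑' t : ℕ, prob d t (fun s => 1 ≤ t ∧ wpos d x s t ∈ W ∧
    ∀ u, 1 ≤ u → u < t → wpos d x s u ∉ W)

/-- `P_x(τ_W < ∞ and S_{τ_W − 1} = y)`. -/
noncomputable def hitFrom (d : ℕ) (W : Set (Pt d)) (x y : Pt d) : ℝ :=
  ∑' t : ℕ, prob d t (fun s => 1 ≤ t ∧ wpos d x s t ∈ W ∧ wpos d x s (t - 1) = y ∧
    ∀ u, 1 ≤ u → u < t → wpos d x s u ∉ W)

/-- `P_x(τ_W < ∞ and S_{τ_W} ∈ T)`. -/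
noncomputable def firstHitIn (d : ℕ) (W T : Set (Pt d)) (x : Pt d) : ℝ :=
  ∑' t : ℕ, prob d t (fun s => 1 ≤ t ∧ wpos d x s t ∈ W ∧ wpos d x s t ∈ T ∧
    ∀ u, 1 ≤ u → u < t → wpos d x s u ∉ W)

/-- `P_x(S_{τ_W − 1} = y ∣ τ_W < ∞)`. -/
noncomputable def transP (d : ℕ) (W : Set (Pt d)) (x y : Pt d) : ℝ :=
  hitFrom d W x y / retProb d W x

/-- The Green's function of simple random walk on `ℤ^d`. -/
noncomputable def green (d : ℕ) (x : Pt d) : ℝ :=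
  ∑' t : ℕ, prob d t (fun s => wpos d x s t = 0)

/-- Configurations: finite subsets of `ℤ^d`. -/
abbrev Conf (d : ℕ) := Finset (Pt d)

/-- `p_U(x, y)`, the probability that HAT activates at `x` and transports to `y`. -/
noncomputable def pHAT (d : ℕ) (U : Conf d) (x y : Pt d) : ℝ :=
  harm d (↑U) x * transP d ((↑U : Set (Pt d)) \ {x}) x y

open Classical in
/-- The transition probabilities of HAT. -/
noncomputable def hatProb (d : ℕ) (U V : Conf d) : ℝ :=
  if V = U then ∑' z : Pt d, pHAT d U z z
  else ∑' x : Pt d, ∑' y : Pt d,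
    if x ∈ U ∧ x ≠ y ∧ V = insert y (U.erase x) then pHAT d U x y else 0

instance (d : ℕ) : MeasurableSpace (Conf d) := ⊤

/-- `μ` is the law of HAT started from `U`. -/
def IsHATLaw (d : ℕ) (U : Conf d) (μ : Measure (ℕ → Conf d)) : Prop :=
  IsProbabilityMeasure μ ∧
  ∀ (t : ℕ) (u : ℕ → Conf d),
    μ {ω | ∀ s ≤ t, ω s = u s} =
      (if u 0 = U then 1 else 0) *
        ∏ s ∈ Finset.range t, ENNReal.ofReal (hatProb d (u s) (u (s + 1)))

/-- A signed permutation plus translation of `ℤ^d`. -/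
def SymImage (d : ℕ) (σ : Equiv.Perm (Fin d)) (ε : Fin d → ℤ) (v : Pt d) (x : Pt d) : Pt d :=
  fun i => v i + ε i * x (σ i)

/-- `SymEq d U V` holds when `V = gU` for a symmetry `g` of `ℤ^d`. -/
def SymEq (d : ℕ) (U V : Conf d) : Prop :=
  ∃ (σ : Equiv.Perm (Fin d)) (ε : Fin d → ℤ) (v : Pt d),
    (∀ i, ε i = 1 ∨ ε i = -1) ∧ V = U.image (SymImage d σ ε v)

/-- Euclidean distance on `ℤ^d`. -/
noncomputable def dist0 (d : ℕ) (x y : Pt d) : ℝ :=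
  Real.sqrt (∑ i, ((x i : ℝ) - (y i : ℝ)) ^ 2)

/-- Euclidean distance between finite subsets of `ℤ^d`. -/
noncomputable def setDist (d : ℕ) (A B : Finset (Pt d)) : ℝ :=
  sInf {r : ℝ | ∃ x ∈ A, ∃ y ∈ B, r = dist0 d x y}

/-- Euclidean diameter of a finite subset of `ℤ^d`. -/
noncomputable def diam0 (d : ℕ) (A : Finset (Pt d)) : ℝ :=
  sSup {r : ℝ | ∃ x ∈ A, ∃ y ∈ A, r = dist0 d x y}

/-- Lattice (nearest-neighbor) adjacency in `ℤ^d`. -/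
def latAdj (d : ℕ) (x y : Pt d) : Prop := (∑ i, (x i - y i).natAbs) = 1

/-- Exterior lattice boundary of a set. -/
def bdry (d : ℕ) (A : Set (Pt d)) : Set (Pt d) := {z | z ∉ A ∧ ∃ w ∈ A, latAdj d z w}

/-- Non-isolated configurations: some exposed element has a lattice neighbor in the set. -/
def NonIso (d : ℕ) (U : Conf d) : Prop :=
  ∃ x ∈ U, 0 < esc d (↑U) x ∧ ∃ y ∈ U, latAdj d x y

/-- `C` is a clustering (ordered partition into nonempty clusters) of `U`. -/
def IsClusteringOf (d : ℕ) {k : ℕ} (C : Fin k → Finset (Pt d)) (U : Finset (Pt d)) : Prop :=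
  (∀ i, (C i).Nonempty) ∧ (∀ i j, i ≠ j → Disjoint (C i) (C j)) ∧
    Finset.univ.biUnion C = U

/-- `C^{≠ i}`, the union of the clusters other than `i`. -/
def others (d : ℕ) {k : ℕ} (C : Fin k → Finset (Pt d)) (i : Fin k) : Finset (Pt d) :=
  Finset.univ.biUnion fun j => if j = i then ∅ else C j

/-- The separation of a clustering. -/
noncomputable def sep (d : ℕ) {k : ℕ} (C : Fin k → Finset (Pt d)) : ℝ :=
  ⨅ i, setDist d (C i) (others d C i)

/-- `(a, b)` separated dimer-or-trimer (DOT) clusterings. -/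
def IsDOT (d : ℕ) {k : ℕ} (C : Fin k → Finset (Pt d)) (a b : ℝ) : Prop :=
  (∀ i, (C i).card = 2 ∨ (C i).card = 3) ∧ a ≤ sep d C ∧
    ∀ i, diam0 d (C i) ≤ b * Real.log (setDist d (C i) (others d C i))

/-- Clusterings with an unspecified number of clusters. -/
abbrev ClusteringS (d : ℕ) := Σ k : ℕ, Fin k → Finset (Pt d)

/-- `π(C)`, the union of the clusters of `C`. -/
def confOf (d : ℕ) (C : ClusteringS d) : Conf d := Finset.univ.biUnion C.2

/-- `C ∈ 𝒞(U, a, b)`. -/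
def InC (d : ℕ) (U : Conf d) (a b : ℝ) (C : ClusteringS d) : Prop :=
  IsClusteringOf d C.2 U ∧ IsDOT d C.2 a b

/-- `U ∈ 𝒰_{d,n}(a, b)`. -/
def InU (d n : ℕ) (a b : ℝ) (U : Conf d) : Prop :=
  U.card = n ∧ ∃ C : ClusteringS d, InC d U a b C

/-- `C` is a clustering of an `n`-element configuration. -/
def IsClusteringConf (d n : ℕ) (C : ClusteringS d) : Prop :=
  (∀ i, (C.2 i).Nonempty) ∧ (∀ i j, i ≠ j → Disjoint (C.2 i) (C.2 j)) ∧
    (confOf d C).card = n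

open Classical in
/-- One step of the natural clustering. -/
noncomputable def clustStep (d : ℕ) (Ut Ut1 : Conf d) (C : ClusteringS d) : ClusteringS d :=
  if Ut1 = Ut then C
  else if h : ∃ p : Pt d × Pt d × Fin C.1,
      Ut \ Ut1 = {p.1} ∧ Ut1 \ Ut = {p.2.1} ∧ p.1 ∈ C.2 p.2.2 then
    ⟨C.1, Function.update C.2 h.choose.2.2
      (insert h.choose.2.1 ((C.2 h.choose.2.2).erase h.choose.1))⟩
  else ⟨1, fun _ => Ut1⟩

/-- The natural clustering of the trajectory `ω` with initial clustering `C0`. -/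
noncomputable def natClust (d : ℕ) (ω : ℕ → Conf d) (C0 : ClusteringS d) : ℕ → ClusteringS d
  | 0 => C0
  | t + 1 => clustStep d (ω t) (ω (t + 1)) (natClust d ω C0 t)

/-- `a_s = s^{1/2 − n^{−100}} + 100 n`. -/
noncomputable def aSep (n s : ℕ) : ℝ :=
  (s : ℝ) ^ ((1 : ℝ) / 2 - (n : ℝ) ^ (-(100 : ℝ))) + 100 * n

/-- `C^{i, x, y}`: remove `x` from cluster `i` of `C` and add `y` to that cluster. -/
def updC (d : ℕ) (C : ClusteringS d) (i : Fin C.1) (x y : Pt d) : ClusteringS d :=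
  ⟨C.1, Function.update C.2 i (insert y ((C.2 i).erase x))⟩

open Classical in
/-- The transition probabilities of the lifting of HAT to clusterings. -/
noncomputable def liftProb (d : ℕ) (E0 E1 : ClusteringS d) : ℝ :=
  ∑' x : Pt d, ∑' y : Pt d,
    if ∃ i : Fin E0.1, x ∈ E0.2 i ∧ E1 = updC d E0 i x y
    then pHAT d (confOf d E0) x y else 0

/-- The capacity of a clustering: the sum of the capacities of its clusters. -/
noncomputable def capS (d : ℕ) (C : ClusteringS d) : ℝ := ∑ i, capa d (↑(C.2 i))

/-- `H_C(i, x) = esc_{C^i}(x) / cap_C`. -/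
noncomputable def harmS (d : ℕ) (C : ClusteringS d) (i : Fin C.1) (x : Pt d) : ℝ :=
  esc d (↑(C.2 i)) x / capS d C

/-- `q_C(i, x, y)`. -/
noncomputable def qIHAT (d : ℕ) (C : ClusteringS d) (i : Fin C.1) (x y : Pt d) : ℝ :=
  harmS d C i x * transP d ((↑(C.2 i) : Set (Pt d)) \ {x}) x y

open Classical in
/-- The transition probabilities of intracluster HAT (IHAT). -/
noncomputable def ihatProb (d : ℕ) (D E : ClusteringS d) : ℝ :=
  ∑' x : Pt d, ∑' y : Pt d, ∑ i : Fin D.1,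
    if x ∈ D.2 i ∧ E = updC d D i x y then qIHAT d D i x y else 0

instance (d : ℕ) : MeasurableSpace (ClusteringS d) := ⊤

open Classical in
/-- `μ` is the law of the lifted HAT chain started from `E0`. -/
def IsLiftLaw (d : ℕ) (E0 : ClusteringS d) (μ : Measure (ℕ → ClusteringS d)) : Prop :=
  IsProbabilityMeasure μ ∧
  ∀ (t : ℕ) (u : ℕ → ClusteringS d),
    μ {ω | ∀ s ≤ t, ω s = u s} =
      (if u 0 = E0 then 1 else 0) *
        ∏ s ∈ Finset.range t, ENNReal.ofReal (liftProb d (u s) (u (s + 1)))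

open Classical in
/-- `μ` is the law of intracluster HAT started from `D0`. -/
def IsIHATLaw (d : ℕ) (D0 : ClusteringS d) (μ : Measure (ℕ → ClusteringS d)) : Prop :=
  IsProbabilityMeasure μ ∧
  ∀ (t : ℕ) (u : ℕ → ClusteringS d),
    μ {ω | ∀ s ≤ t, ω s = u s} =
      (if u 0 = D0 then 1 else 0) *
        ∏ s ∈ Finset.range t, ENNReal.ofReal (ihatProb d (u s) (u (s + 1)))

/-- `Pairs(E0, E1)`. -/
def Pairs (d : ℕ) (E0 E1 : ClusteringS d) : Set (Pt d × Pt d) :=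
  {p | 0 < pHAT d (confOf d E0) p.1 p.2 ∧
    ∃ i : Fin E0.1, p.1 ∈ E0.2 i ∧ E1 = updC d E0 i p.1 p.2}

/-- `Triples(E0, E1)`. -/
def Triples (d : ℕ) (E0 E1 : ClusteringS d) : Set (Fin E0.1 × Pt d × Pt d) :=
  {q | 0 < qIHAT d E0 q.1 q.2.1 q.2.2 ∧ E1 = updC d E0 q.1 q.2.1 q.2.2}

/-- The first standard basis vector of `ℤ^d`. -/
def e1v (d : ℕ) : Pt d := fun i => if (i : ℕ) = 0 then 1 else 0

/-- Reference dimers and trimers. -/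
def Ref (d : ℕ) : Set (Finset (Pt d)) :=
  {A | ∃ x : Pt d, A = {x, x + e1v d} ∨ A = {x, x + e1v d, x + e1v d + e1v d}}

/-- *-adjacency in `ℤ^d`: distinct points differing by at most one in each coordinate. -/
def starAdj (d : ℕ) (x y : Pt d) : Prop := x ≠ y ∧ ∀ i, (x i - y i).natAbs ≤ 1

/-- The *-visible boundary of `A`. -/
def visBdry (d : ℕ) (A : Finset (Pt d)) : Set (Pt d) :=
  {x | (∃ y ∈ A, starAdj d x y) ∧
    ∃ γ : ℕ → Pt d, γ 0 = x ∧ (∀ t, latAdj d (γ t) (γ (t + 1))) ∧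
      (∀ t, γ t ∉ A) ∧ ∀ r : ℝ, ∃ t, r < dist0 d (γ t) 0}

/-- `A` is connected in the nearest-neighbor graph of `ℤ^d`. -/
def LatConnected (d : ℕ) (A : Finset (Pt d)) : Prop :=
  ∀ x ∈ A, ∀ y ∈ A, ∃ (L : ℕ) (γ : ℕ → Pt d), γ 0 = x ∧ γ L = y ∧
    (∀ t < L, latAdj d (γ t) (γ (t + 1))) ∧ ∀ t ≤ L, γ t ∈ A

/-- Strict lexicographic order on `ℤ^d`. -/
def lexLt (d : ℕ) (x y : Pt d) : Prop :=
  ∃ i : Fin d, (∀ j, j < i → x j = y j) ∧ x i < y i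

/-- `x` is the lex (least) element of `A`. -/
def IsLex (d : ℕ) (A : Finset (Pt d)) (x : Pt d) : Prop :=
  x ∈ A ∧ ∀ y ∈ A, y ≠ x → lexLt d x y

/-!
With `m = (d - 2) / 2`, the function `h(x) = (|x|² + a)^{-m}` is strictly superharmonic once `a` is
large: in a pair of opposite steps the odd Taylor terms cancel, and summing over the coordinates the
leading term is proportional to `2 (m + 1) - d = 0`. A multiple of `h` therefore dominates `G`,
which gives `G(x) ≤ K |x|^{2-d}`. One step of the walk from `o` gives `G = G(o) - 1` at the unit
vectors, and hence `G ≤ G(o) - 1` off `o`, since the walk must visit a unit vector before `o`.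

The function `w(z) = ∑_{y ∈ A} G(z - y) / G(o)` is at least `1` on `A` and harmonic off `A`, so
`1 - w` is a lower bound for the probability of avoiding `A`. One step from `x ∈ A` turns this into
`esc_A(x) ≥ (1 - ∑_{y ∈ A, y ≠ x} G(x - y)) / G(o)`. The points `y` in the cluster of `x` contribute
at most `G(o) - 1` each, the others at most `K sep(C)^{2-d}` each.
-/

variable {d : ℕ}

section Steps

/-- The unit step of `ℤ^d` in a signed coordinate direction, so that the `2d` elements of `Dir d`
are indexed by `Fin d × ℤˣ`. -/
def unitStep (p : Fin d × ℤˣ) : Pt d := Pi.single p.1 (p.2 : ℤ)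

theorem unitStep_neg (i : Fin d) (ε : ℤˣ) : unitStep (i, -ε) = -unitStep (i, ε) := by
  simp [unitStep, Pi.single_neg]

theorem unitStep_injective : Function.Injective (unitStep (d := d)) := by
  rintro ⟨i, ε⟩ ⟨j, δ⟩ h
  have hi : (ε : ℤ) = (Pi.single j (δ : ℤ) : Pt d) i := by
    simpa [unitStep] using congrFun h i
  obtain rfl : i = j := by
    by_contra hij
    simp [hij] at hi
  simpa [Units.ext_iff] using hi

theorem range_unitStep : Set.range (unitStep (d := d)) = Dir d := by
  ext s
  simp only [Set.mem_range, Prod.exists, Dir, Set.mem_ofPred_eq, unitStep]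
  refine exists_congr fun i => ⟨?_, ?_⟩
  · rintro ⟨ε, rfl⟩
    rcases Int.units_eq_one_or ε with rfl | rfl <;> simp
  · rintro (rfl | rfl)
    exacts [⟨1, by simp⟩, ⟨-1, by simp⟩]

end Steps

section Average

/-- The one-step averaging operator of simple random walk on `ℤ^d`. -/
noncomputable def avg : (Pt d → ℝ) →ₗ[ℝ] Pt d → ℝ where
  toFun f x := (∑ p, f (x + unitStep p)) / (2 * d)
  map_add' f g := by
    ext x
    simp [Finset.sum_add_distrib, add_div]
  map_smul' c f := by
    ext x
    simp [← Finset.mul_sum, mul_div_assoc]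

theorem avg_apply (f : Pt d → ℝ) (x : Pt d) : avg f x = (∑ p, f (x + unitStep p)) / (2 * d) :=
  rfl

theorem avg_le_avg {f g : Pt d → ℝ} {x : Pt d}
    (h : ∀ p, f (x + unitStep p) ≤ g (x + unitStep p)) : avg f x ≤ avg g x :=
  div_le_div_of_nonneg_right (Finset.sum_le_sum fun p _ => h p) (by positivity)

theorem avg_eq_of_forall [NeZero d] {f : Pt d → ℝ} {x : Pt d} {b : ℝ}
    (h : ∀ p, f (x + unitStep p) = b) : avg f x = b := by
  have hd : (d : ℝ) ≠ 0 := NeZero.ne _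
  simp only [avg_apply, h, Finset.sum_const, Finset.card_univ, Fintype.card_prod,
    Fintype.card_fin, Fintype.card_units_int, nsmul_eq_mul]
  push_cast
  field_simp

theorem avg_le_of_forall_le [NeZero d] {f : Pt d → ℝ} {x : Pt d} {b : ℝ}
    (h : ∀ p, f (x + unitStep p) ≤ b) : avg f x ≤ b :=
  (avg_le_avg h).trans_eq (avg_eq_of_forall (f := fun _ => b) fun _ => rfl)

theorem avg_one_sub [NeZero d] (f : Pt d → ℝ) (x : Pt d) :
    avg (fun z => 1 - f z) x = 1 - avg f x := by
  have hsub : (fun z => 1 - f z) = (fun _ => 1) - f := rfl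
  rw [hsub, map_sub, Pi.sub_apply, avg_eq_of_forall fun _ => rfl]

theorem avg_comp_sub_right (f : Pt d → ℝ) (x y : Pt d) :
    avg (fun z => f (z - y)) x = avg f (x - y) := by
  simp only [avg_apply, add_sub_right_comm]

theorem avg_comp_of_map_unitStep {L : Pt d → Pt d} (e : Equiv.Perm (Fin d × ℤˣ))
    (hL : ∀ x p, L (x + unitStep p) = L x + unitStep (e p)) (f : Pt d → ℝ) (x : Pt d) :
    avg (f ∘ L) x = avg f (L x) := by
  simp only [avg_apply, Function.comp_apply, hL]
  rw [Equiv.sum_comp e fun p => f (L x + unitStep p)]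

theorem tendsto_avg {ι : Type*} {l : Filter ι} {F : ι → Pt d → ℝ} {f : Pt d → ℝ}
    (h : ∀ x, Filter.Tendsto (fun n => F n x) l (nhds (f x))) (x : Pt d) :
    Filter.Tendsto (fun n => avg (F n) x) l (nhds (avg f x)) :=
  (tendsto_finsetSum _ fun p _ => h (x + unitStep p)).div_const _

end Average

section Walk

theorem natCard_subtype_fin_succ {α : Type*} [Fintype α] {n : ℕ} (Q : (Fin (n + 1) → α) → Prop) :
    Nat.card {w // Q w} = ∑ a, Nat.card {w : Fin n → α // Q (Fin.cons a w)} := by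
  rw [← Nat.card_sigma]
  exact Nat.card_congr <|
    ((Fin.consEquiv fun _ => α).subtypeEquiv fun _ => Iff.rfl).symm.trans
      (Equiv.subtypeProdEquivSigmaSubtype fun a w => Q (Fin.cons a w))

theorem prob_eq_natCard_unitStep_comp (T : ℕ) (P : (Fin T → Pt d) → Prop) :
    prob d T P =
      (Nat.card {w : Fin T → Fin d × ℤˣ // P (unitStep ∘ w)} : ℝ) / ((2 * d : ℕ) : ℝ) ^ T := by
  have hmem (w : Fin T → Fin d × ℤˣ) (i : Fin T) : (unitStep ∘ w) i ∈ Dir d :=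
    range_unitStep ▸ Set.mem_range_self (w i)
  unfold prob
  congr 2
  refine (Nat.card_congr (.ofBijective
    (fun w => ⟨unitStep ∘ w.1, hmem w.1, w.2⟩) ⟨fun v w h => ?_, fun ⟨s, hs, hP⟩ => ?_⟩)).symm
  · exact Subtype.ext (unitStep_injective.comp_left (congrArg Subtype.val h))
  · simp only [← range_unitStep, Set.mem_range] at hs
    choose w hw using hs
    obtain rfl : unitStep ∘ w = s := funext hw
    exact ⟨⟨w, hP⟩, rfl⟩

theorem prob_succ (T : ℕ) (P : (Fin (T + 1) → Pt d) → Prop) :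
    prob d (T + 1) P = (∑ p, prob d T fun s => P (Fin.cons (unitStep p) s)) / (2 * d) := by
  simp only [prob_eq_natCard_unitStep_comp, natCard_subtype_fin_succ, ← Fin.comp_cons]
  rw [← Finset.sum_div, div_div, ← Nat.cast_sum, pow_succ]
  push_cast
  rfl

theorem prob_zero (P : (Fin 0 → Pt d) → Prop) [Decidable (P Fin.elim0)] :
    prob d 0 P = if P Fin.elim0 then 1 else 0 := by
  split_ifs with h <;>
    simp [prob, Subsingleton.elim _ (Fin.elim0 : Fin 0 → Pt d), h]

theorem prob_nonneg (T : ℕ) (P : (Fin T → Pt d) → Prop) : 0 ≤ prob d T P := by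
  unfold prob
  positivity

theorem wpos_zero (x : Pt d) {T : ℕ} (s : Fin T → Pt d) : wpos d x s 0 = x := by
  simp [wpos]

theorem wpos_cons_succ (x e : Pt d) {T : ℕ} (s : Fin T → Pt d) (t : ℕ) :
    wpos d x (Fin.cons e s : Fin (T + 1) → Pt d) (t + 1) = wpos d (x + e) s t := by
  simp [wpos, Finset.sum_filter, Fin.sum_univ_succ, add_assoc]

end Walk

section Superharmonic

open Asymptotics Filter Topology

theorem one_add_rpow_sub_cubic_isBigO (a : ℝ) :
    (fun s : ℝ => (1 + s) ^ a -
      (1 + a * s + a * (a - 1) / 2 * s ^ 2 + a * (a - 1) * (a - 2) / 6 * s ^ 3))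
      =O[𝓝 0] fun s => s ^ 4 := by
  have hchoose (n : ℕ) : Ring.choose a n = (descPochhammer ℤ n).smeval a / n.factorial := by
    rw [Ring.choose_eq_smul, smul_eq_mul, inv_mul_eq_div]
  have hpartial (s : ℝ) : (binomialSeries ℝ a).partialSum 4 s =
      1 + a * s + a * (a - 1) / 2 * s ^ 2 + a * (a - 1) * (a - 2) / 6 * s ^ 3 := by
    simp only [FormalMultilinearSeries.partialSum, Finset.sum_range_succ, Finset.sum_range_zero,
      binomialSeries_apply, hchoose, descPochhammer_succ_right, descPochhammer_zero,
      Polynomial.smeval_mul, Polynomial.smeval_sub, Polynomial.smeval_X,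
      Polynomial.smeval_natCast, Polynomial.smeval_one]
    simp [List.ofFn_succ, Nat.factorial]
    ring
  have htaylor := (Real.one_add_rpow_hasFPowerSeriesAt_zero (a := a)).isBigO_sub_partialSum_pow 4
  simp only [zero_add, hpartial, ← norm_pow] at htaylor
  exact htaylor.of_norm_right

theorem exists_one_add_rpow_neg_le_cubic (m : ℝ) :
    ∃ C δ : ℝ, 0 ≤ C ∧ 0 < δ ∧ ∀ s : ℝ, s ^ 2 < δ ^ 2 → (1 + s) ^ (-m) ≤
      1 - m * s + m * (m + 1) / 2 * s ^ 2 - m * (m + 1) * (m + 2) / 6 * s ^ 3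
        + C * (s ^ 2) ^ 2 := by
  obtain ⟨C, hC, hbound⟩ := (one_add_rpow_sub_cubic_isBigO (-m)).exists_nonneg
  obtain ⟨δ, hδ, hball⟩ := Metric.eventually_nhds_iff.1 hbound.bound
  refine ⟨C, δ, hC, hδ, fun s hs => ?_⟩
  have hs' : dist s 0 < δ := by simpa using abs_lt_of_sq_lt_sq hs hδ.le
  have := (le_abs_self _).trans (hball hs')
  rw [Real.norm_of_nonneg (by positivity)] at this
  linear_combination this

theorem exists_one_add_rpow_neg_add_le {m : ℝ} (hm : 0 < m) :
    ∃ K u₀ : ℝ, 0 < u₀ ∧ ∀ u v : ℝ, 0 < u → u ≤ u₀ → v ^ 2 ≤ 4 * u →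
      (1 + (u + v)) ^ (-m) + (1 + (u - v)) ^ (-m) ≤
        2 - 2 * m * u + m * (m + 1) * v ^ 2 + K * u ^ 2 := by
  obtain ⟨C, δ, hC, hδ, hcubic⟩ := exists_one_add_rpow_neg_le_cubic m
  refine ⟨m * (m + 1) + 200 * C, min 1 (δ ^ 2 / 11), by positivity,
    fun u v hu hu₀ hv => ?_⟩
  obtain ⟨hu1, huδ⟩ := le_min_iff.1 hu₀
  have husq : u ^ 2 ≤ u := by nlinarith
  have hplus : (u + v) ^ 2 ≤ 10 * u := by linarith [add_sq_le (a := u) (b := v)]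
  have hminus : (u - v) ^ 2 ≤ 10 * u := by linarith [add_sq_le (a := u) (b := -v), neg_sq v]
  have hthird : 0 ≤ (u + v) ^ 3 + (u - v) ^ 3 := by
    rw [show (u + v) ^ 3 + (u - v) ^ 3 = 2 * u ^ 3 + 6 * u * v ^ 2 by ring]
    positivity
  have hfourth : ((u + v) ^ 2) ^ 2 + ((u - v) ^ 2) ^ 2 ≤ 200 * u ^ 2 := by
    calc _ ≤ (10 * u) ^ 2 + (10 * u) ^ 2 := by gcongr
      _ = _ := by ring
  calc (1 + (u + v)) ^ (-m) + (1 + (u - v)) ^ (-m)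
      ≤ _ := add_le_add (hcubic (u + v) (by linarith)) (hcubic (u - v) (by linarith))
    _ = 2 - 2 * m * u + m * (m + 1) * (u ^ 2 + v ^ 2)
          - m * (m + 1) * (m + 2) / 6 * ((u + v) ^ 3 + (u - v) ^ 3)
          + C * (((u + v) ^ 2) ^ 2 + ((u - v) ^ 2) ^ 2) := by ring
    _ ≤ 2 - 2 * m * u + m * (m + 1) * (u ^ 2 + v ^ 2) - 0 + C * (200 * u ^ 2) := by
        gcongr
        positivity
    _ = _ := by ring

/-- The squared Euclidean norm on `ℤ^d`. -/
def normSq (x : Pt d) : ℝ := ∑ i, (x i : ℝ) ^ 2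

theorem normSq_nonneg (x : Pt d) : 0 ≤ normSq x :=
  Finset.sum_nonneg fun _ _ => sq_nonneg _

theorem sq_le_normSq (x : Pt d) (i : Fin d) : (x i : ℝ) ^ 2 ≤ normSq x :=
  Finset.single_le_sum (f := fun j => (x j : ℝ) ^ 2) (fun _ _ => sq_nonneg _) (Finset.mem_univ i)

theorem normSq_add_unitStep (x : Pt d) (i : Fin d) (ε : ℤˣ) :
    normSq (x + unitStep (i, ε)) = normSq x + (1 + 2 * (ε : ℤ) * x i) := by
  rw [← sub_eq_iff_eq_add', normSq, normSq, ← Finset.sum_sub_distrib, Finset.sum_eq_single i]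
  · have hε : ((ε : ℤ) : ℝ) ^ 2 = 1 := by
      rcases Int.units_eq_one_or ε with rfl | rfl <;> simp
    simp only [unitStep, Pi.add_apply, Pi.single_eq_same, Int.cast_add]
    linear_combination hε
  · intro j _ hj
    simp [unitStep, hj]
  · simp

/-- The lattice regularization `(|x|² + a)^{-m}` of `|x|^{-2m}`; the choice `m = (d - 2) / 2`
corresponds to the decay of the Green's function. -/
noncomputable def radialPow (a m : ℝ) (x : Pt d) : ℝ := (normSq x + a) ^ (-m)

theorem radialPow_nonneg {a : ℝ} (ha : 0 ≤ a) (m : ℝ) (x : Pt d) : 0 ≤ radialPow a m x :=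
  Real.rpow_nonneg (add_nonneg (normSq_nonneg x) ha) _

theorem exists_radialPow_add_radialPow_le {m : ℝ} (hm : 0 < m) :
    ∃ K a₀ : ℝ, ∀ a, 1 ≤ a → a₀ ≤ a → ∀ (x : Pt d) (i : Fin d),
      radialPow a m (x + unitStep (i, 1)) + radialPow a m (x + unitStep (i, -1)) ≤
        radialPow a m x * (2 - 2 * m * (normSq x + a)⁻¹
          + (4 * m * (m + 1) * (x i : ℝ) ^ 2 + K) * (normSq x + a)⁻¹ ^ 2) := by
  obtain ⟨K, u₀, hu₀, hpair⟩ := exists_one_add_rpow_neg_add_le hm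
  refine ⟨K, u₀⁻¹, fun a ha ha₀ x i => ?_⟩
  have hx := normSq_nonneg x
  set R := normSq x + a with hR
  have hR0 : 0 < R := by linarith
  have hstep (ε : ℤˣ) : radialPow a m (x + unitStep (i, ε)) =
      radialPow a m x * (1 + (R⁻¹ + (ε : ℤ) * (2 * x i * R⁻¹))) ^ (-m) := by
    have hquot : 1 + (R⁻¹ + (ε : ℤ) * (2 * x i * R⁻¹)) =
        (normSq (x + unitStep (i, ε)) + a) / R := by
      rw [normSq_add_unitStep, add_right_comm, ← hR]
      field_simp
    have hpos : 0 ≤ normSq (x + unitStep (i, ε)) + a := by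
      linarith [normSq_nonneg (x + unitStep (i, ε))]
    rw [hquot, radialPow, radialPow, ← hR, Real.div_rpow hpos hR0.le,
      mul_div_cancel₀ _ (Real.rpow_pos_of_pos hR0 _).ne']
  have hsmall : R⁻¹ ≤ u₀ := inv_le_of_inv_le₀ hu₀ (by linarith)
  have hsq : (2 * x i * R⁻¹) ^ 2 ≤ 4 * R⁻¹ := by
    calc (2 * x i * R⁻¹) ^ 2 = 4 * (x i : ℝ) ^ 2 * R⁻¹ ^ 2 := by ring
      _ ≤ 4 * R * R⁻¹ ^ 2 := by
        gcongr
        linarith [sq_le_normSq x i]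
      _ = 4 * R⁻¹ := by field_simp
  rw [hstep, hstep, ← mul_add]
  refine mul_le_mul_of_nonneg_left ?_ (radialPow_nonneg (by linarith) m x)
  have := hpair R⁻¹ (2 * x i * R⁻¹) (by positivity) hsmall hsq
  simp only [Units.val_one, Units.val_neg, Int.cast_one, Int.cast_neg, neg_mul, one_mul,
    ← sub_eq_add_neg]
  linear_combination this

theorem exists_sum_radialPow_le {m : ℝ} (hm : 0 < m) :
    ∃ K a₀ : ℝ, ∀ a, 1 ≤ a → a₀ ≤ a → ∀ x : Pt d,
      ∑ p, radialPow a m (x + unitStep p) ≤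
        radialPow a m x * (2 * d + 2 * m * (2 * (m + 1) - d) * (normSq x + a)⁻¹
          - (4 * m * (m + 1) * a - d * K) * (normSq x + a)⁻¹ ^ 2) := by
  obtain ⟨K, a₀, hpair⟩ := exists_radialPow_add_radialPow_le (d := d) hm
  refine ⟨K, a₀, fun a ha ha₀ x => ?_⟩
  have hx := normSq_nonneg x
  set u := (normSq x + a)⁻¹
  have hnorm : normSq x * u = 1 - a * u := by
    have : (normSq x + a) * u = 1 := mul_inv_cancel₀ (by linarith)
    linear_combination this
  rw [Fintype.sum_prod_type]
  calc ∑ i, ∑ ε, radialPow a m (x + unitStep (i, ε))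
      ≤ ∑ i, radialPow a m x *
          (2 - 2 * m * u + (4 * m * (m + 1) * (x i : ℝ) ^ 2 + K) * u ^ 2) := by
        refine Finset.sum_le_sum fun i _ => ?_
        rw [UnitsInt.univ, Finset.sum_pair (by decide)]
        exact hpair a ha ha₀ x i
    _ = radialPow a m x *
          (2 * d - 2 * m * d * u + 4 * m * (m + 1) * u * (normSq x * u) + d * K * u ^ 2) := by
        rw [← Finset.mul_sum]
        simp only [add_mul, Finset.sum_add_distrib, Finset.sum_const, Finset.card_univ,
          Fintype.card_fin, nsmul_eq_mul, ← Finset.sum_mul, ← Finset.mul_sum, ← normSq.eq_1]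
        ring
    _ = _ := by
        rw [hnorm]
        ring

theorem exists_avg_radialPow_lt {m : ℝ} (hm : 0 < m) (hmd : 2 * (m + 1) ≤ d) :
    ∃ a : ℝ, 1 ≤ a ∧ ∀ x : Pt d, avg (radialPow a m) x < radialPow a m x := by
  obtain ⟨K, a₀, hsum⟩ := exists_sum_radialPow_le (d := d) hm
  obtain ⟨a, ha1, ha₀, haK⟩ := ((eventually_ge_atTop (1 : ℝ)).and <|
    (eventually_ge_atTop a₀).and <| eventually_gt_atTop (d * K / (4 * m * (m + 1)))).exists
  refine ⟨a, ha1, fun x => ?_⟩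
  have hd : (0 : ℝ) < d := by linarith
  have hR : 0 < normSq x + a := by linarith [normSq_nonneg x]
  have hfirst : 2 * m * (2 * (m + 1) - d) * (normSq x + a)⁻¹ ≤ 0 :=
    mul_nonpos_of_nonpos_of_nonneg
      (mul_nonpos_of_nonneg_of_nonpos (by positivity) (by linarith)) (by positivity)
  have hsecond : 0 < (4 * m * (m + 1) * a - d * K) * (normSq x + a)⁻¹ ^ 2 :=
    mul_pos (sub_pos.2 ((div_lt_iff₀' (by positivity)).1 haK)) (by positivity)
  rw [avg_apply, div_lt_iff₀ (by positivity)]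
  exact (hsum a ha1 ha₀ x).trans_lt <|
    mul_lt_mul_of_pos_left (by linarith) (Real.rpow_pos_of_pos hR _)

end Superharmonic

section Distance

theorem normSq_sub (x y : Pt d) : normSq (x - y) = dist0 d x y ^ 2 := by
  rw [dist0, Real.sq_sqrt (Finset.sum_nonneg fun _ _ => sq_nonneg _)]
  simp [normSq]

theorem dist0_pos {x y : Pt d} (h : x ≠ y) : 0 < dist0 d x y := by
  obtain ⟨i, hi⟩ := Function.ne_iff.1 h
  have : (x i : ℝ) - y i ≠ 0 := sub_ne_zero.2 (by exact_mod_cast hi)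
  exact Real.sqrt_pos.2 <|
    Finset.sum_pos' (fun _ _ => sq_nonneg _) ⟨i, Finset.mem_univ i, by positivity⟩

theorem setDist_le_dist0 {A B : Finset (Pt d)} {x y : Pt d} (hx : x ∈ A) (hy : y ∈ B) :
    setDist d A B ≤ dist0 d x y :=
  csInf_le ⟨0, by rintro _ ⟨_, -, _, -, rfl⟩; exact Real.sqrt_nonneg _⟩ ⟨x, hx, y, hy, rfl⟩

theorem setDist_pos {A B : Finset (Pt d)} (hA : A.Nonempty) (hB : B.Nonempty)
    (hAB : Disjoint A B) : 0 < setDist d A B := by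
  have hfinite : {r : ℝ | ∃ x ∈ A, ∃ y ∈ B, r = dist0 d x y}.Finite := by
    refine ((A ×ˢ B).image fun p => dist0 d p.1 p.2).finite_toSet.subset ?_
    rintro _ ⟨x, hx, y, hy, rfl⟩
    simp only [Finset.coe_image, Set.mem_image, Finset.mem_coe, Finset.mem_product]
    exact ⟨(x, y), ⟨hx, hy⟩, rfl⟩
  have hne : {r : ℝ | ∃ x ∈ A, ∃ y ∈ B, r = dist0 d x y}.Nonempty := by
    obtain ⟨⟨x, hx⟩, y, hy⟩ := And.intro hA hB
    exact ⟨_, x, hx, y, hy, rfl⟩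
  obtain ⟨x, hx, y, hy, hmin⟩ := hne.csInf_mem hfinite
  rw [setDist, hmin]
  exact dist0_pos (Finset.disjoint_iff_ne.1 hAB x hx y hy)

variable {k : ℕ} {C : Fin k → Finset (Pt d)}

theorem mem_others {i : Fin k} {x : Pt d} : x ∈ others d C i ↔ ∃ j ≠ i, x ∈ C j := by
  simp only [others, Finset.mem_biUnion, Finset.mem_univ, true_and]
  refine exists_congr fun j => ?_
  split_ifs with hj <;> simp [hj]

theorem IsClusteringOf.disjoint_others {U : Finset (Pt d)} (hC : IsClusteringOf d C U)
    (i : Fin k) : Disjoint (C i) (others d C i) := by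
  refine Finset.disjoint_left.2 fun x hx hothers => ?_
  obtain ⟨j, hji, hxj⟩ := mem_others.1 hothers
  exact Finset.disjoint_left.1 (hC.2.1 i j hji.symm) hx hxj

theorem IsClusteringOf.union_others {U : Finset (Pt d)} (hC : IsClusteringOf d C U)
    (i : Fin k) : C i ∪ others d C i = U := by
  ext x
  simp only [← hC.2.2, Finset.mem_union, mem_others, Finset.mem_biUnion, Finset.mem_univ, true_and]
  constructor
  · rintro (hx | ⟨j, -, hx⟩)
    exacts [⟨i, hx⟩, ⟨j, hx⟩]
  · rintro ⟨j, hx⟩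
    by_cases hji : j = i
    exacts [.inl (hji ▸ hx), .inr ⟨j, hji, hx⟩]

theorem IsClusteringOf.sum_erase {U : Finset (Pt d)} (hC : IsClusteringOf d C U) {i : Fin k}
    {x : Pt d} (hx : x ∈ C i) (f : Pt d → ℝ) :
    ∑ y ∈ U.erase x, f y = ∑ y ∈ (C i).erase x, f y + ∑ y ∈ others d C i, f y := by
  have hdisj := hC.disjoint_others i
  rw [← hC.union_others i, Finset.erase_union_distrib,
    Finset.erase_eq_of_notMem (Finset.disjoint_left.1 hdisj hx),
    Finset.sum_union (hdisj.mono_left (Finset.erase_subset x _))]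

theorem sep_le_dist0 {i : Fin k} {x y : Pt d} (hx : x ∈ C i) (hy : y ∈ others d C i) :
    sep d C ≤ dist0 d x y :=
  (ciInf_le (Set.finite_range _).bddBelow i).trans (setDist_le_dist0 hx hy)

theorem IsClusteringOf.sep_pos [Nontrivial (Fin k)] {U : Finset (Pt d)}
    (hC : IsClusteringOf d C U) : 0 < sep d C := by
  obtain ⟨i, hi⟩ := exists_eq_ciInf_of_finite (f := fun i => setDist d (C i) (others d C i))
  obtain ⟨j, hji⟩ := exists_ne i
  have hothers : (others d C i).Nonempty := (hC.1 j).mono fun x hx => mem_others.2 ⟨j, hji, hx⟩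
  rw [sep, ← hi]
  exact setDist_pos (hC.1 i) hothers (hC.disjoint_others i)

end Distance

section HeatKernel

/-- The probability `P_x(S_t = 0)` that the walk started at `x` is at the origin at time `t`. -/
noncomputable def heatKernel (t : ℕ) (x : Pt d) : ℝ := prob d t fun s => wpos d x s t = 0

theorem heatKernel_zero (x : Pt d) : heatKernel 0 x = if x = 0 then 1 else 0 := by
  simp [heatKernel, prob_zero, wpos_zero]

theorem heatKernel_succ (t : ℕ) (x : Pt d) : heatKernel (t + 1) x = avg (heatKernel t) x := by
  simp only [heatKernel, prob_succ, wpos_cons_succ, avg_apply]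

theorem heatKernel_nonneg (t : ℕ) (x : Pt d) : 0 ≤ heatKernel t x :=
  prob_nonneg _ _

theorem heatKernel_comp_of_map_unitStep {L : Pt d → Pt d} (e : Equiv.Perm (Fin d × ℤˣ))
    (hL : ∀ x p, L (x + unitStep p) = L x + unitStep (e p)) (hL0 : ∀ x, L x = 0 ↔ x = 0)
    (t : ℕ) (x : Pt d) : heatKernel t (L x) = heatKernel t x := by
  induction t generalizing x with
  | zero => simp only [heatKernel_zero, hL0]
  | succ t ih =>
    rw [heatKernel_succ, heatKernel_succ, ← avg_comp_of_map_unitStep e hL]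
    exact congrArg (avg · x) (funext ih)

theorem heatKernel_unitStep (t : ℕ) (p q : Fin d × ℤˣ) :
    heatKernel t (unitStep p) = heatKernel t (unitStep q) := by
  obtain ⟨i, ε⟩ := p
  obtain ⟨j, δ⟩ := q
  let L (x : Pt d) : Pt d := fun k => ((δ * ε : ℤˣ) : ℤ) * x (Equiv.swap i j k)
  let e : Equiv.Perm (Fin d × ℤˣ) := (Equiv.swap i j).prodCongr (Equiv.mulLeft (δ * ε))
  have hL (x : Pt d) (r : Fin d × ℤˣ) : L (x + unitStep r) = L x + unitStep (e r) := by
    ext k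
    have hswap : Equiv.swap i j k = r.1 ↔ k = Equiv.swap i j r.1 := Equiv.swap_apply_eq_iff
    simp [L, e, unitStep, mul_add, Pi.single_apply, hswap]
  have hL0 (x : Pt d) : L x = 0 ↔ x = 0 := by
    refine ⟨fun h => funext fun k => ?_, ?_⟩
    · simpa [L] using congrFun h (Equiv.swap i j k)
    · rintro rfl
      exact funext fun _ => mul_zero _
  have hLp : L (unitStep (i, ε)) = unitStep (j, δ) := by
    have hL00 : L 0 = 0 := (hL0 0).2 rfl
    have := hL 0 (i, ε)
    simpa [hL00, e, mul_assoc, Int.units_mul_self] using this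
  rw [← hLp, heatKernel_comp_of_map_unitStep e hL hL0]

/-- The truncated Green's function: the expected number of visits to the origin strictly before
time `T`. -/
noncomputable def greenTrunc (T : ℕ) (x : Pt d) : ℝ := ∑ t ∈ Finset.range T, heatKernel t x

theorem greenTrunc_zero (x : Pt d) : greenTrunc 0 x = 0 :=
  Finset.sum_range_zero _

theorem greenTrunc_succ (T : ℕ) (x : Pt d) :
    greenTrunc (T + 1) x = (if x = 0 then 1 else 0) + avg (greenTrunc T) x := by
  have hsum : greenTrunc (d := d) T = ∑ t ∈ Finset.range T, heatKernel t :=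
    (Finset.sum_fn _ _).symm
  rw [greenTrunc, Finset.sum_range_succ', heatKernel_zero, add_comm, hsum, map_sum,
    Finset.sum_apply]
  simp only [heatKernel_succ]

theorem greenTrunc_le_of_supersolution {f : Pt d → ℝ} (hf0 : ∀ x, 0 ≤ f x)
    (hf : ∀ x, (if x = 0 then 1 else 0) + avg f x ≤ f x) (T : ℕ) (x : Pt d) :
    greenTrunc T x ≤ f x := by
  induction T generalizing x with
  | zero => exact (greenTrunc_zero x).trans_le (hf0 x)
  | succ T ih =>
    rw [greenTrunc_succ]
    exact (add_le_add_right (avg_le_avg fun p => ih _) _).trans (hf x)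

theorem exists_greenTrunc_le_radialPow {m : ℝ} (hm : 0 < m) (hmd : 2 * (m + 1) ≤ d) :
    ∃ K a : ℝ, 0 < K ∧ 1 ≤ a ∧ ∀ (T : ℕ) (x : Pt d), greenTrunc T x ≤ K * radialPow a m x := by
  obtain ⟨a, ha, hsuper⟩ := exists_avg_radialPow_lt hm hmd
  have hgap : 0 < radialPow a m (0 : Pt d) - avg (radialPow a m) 0 := sub_pos.2 (hsuper 0)
  set K := (radialPow a m (0 : Pt d) - avg (radialPow a m) 0)⁻¹
  have hK : 0 < K := inv_pos.2 hgap
  refine ⟨K, a, hK, ha, greenTrunc_le_of_supersolution (f := K • radialPow a m)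
    (fun x => mul_nonneg hK.le (radialPow_nonneg (by linarith) m x)) fun x => ?_⟩
  rw [map_smul, Pi.smul_apply, Pi.smul_apply, smul_eq_mul, smul_eq_mul]
  split_ifs with hx
  · subst hx
    have : K * (radialPow a m (0 : Pt d) - avg (radialPow a m) 0) = 1 := inv_mul_cancel₀ hgap.ne'
    linarith
  · rw [zero_add]
    exact mul_le_mul_of_nonneg_left (hsuper x).le hK.le

end HeatKernel

section Green

theorem green_nonneg (x : Pt d) : 0 ≤ green d x :=
  tsum_nonneg fun t => heatKernel_nonneg t x

theorem green_unitStep_eq (p q : Fin d × ℤˣ) : green d (unitStep p) = green d (unitStep q) :=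
  tsum_congr fun t => heatKernel_unitStep t p q

theorem summable_heatKernel (hd : 3 ≤ d) (x : Pt d) : Summable fun t => heatKernel t x := by
  have hd' : (3 : ℝ) ≤ d := by exact_mod_cast hd
  obtain ⟨K, a, -, -, hle⟩ := exists_greenTrunc_le_radialPow (d := d) (m := 1 / 2)
    (by norm_num) (by linarith)
  exact summable_of_sum_range_le (fun t => heatKernel_nonneg t x) fun T => hle T x

theorem greenTrunc_le_green (hd : 3 ≤ d) (T : ℕ) (x : Pt d) : greenTrunc T x ≤ green d x :=
  (summable_heatKernel hd x).sum_le_tsum _ fun t _ => heatKernel_nonneg t x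

theorem tendsto_greenTrunc (hd : 3 ≤ d) (x : Pt d) :
    Filter.Tendsto (fun T => greenTrunc T x) Filter.atTop (nhds (green d x)) :=
  (summable_heatKernel hd x).hasSum.tendsto_sum_nat

theorem green_le_of_greenTrunc_le (hd : 3 ≤ d) {x : Pt d} {b : ℝ} (h : ∀ T, greenTrunc T x ≤ b) :
    green d x ≤ b :=
  le_of_tendsto' (tendsto_greenTrunc hd x) h

theorem green_eq_ite_add_avg (hd : 3 ≤ d) (x : Pt d) :
    green d x = (if x = 0 then 1 else 0) + avg (green d) x := by
  have hshift := (Filter.tendsto_add_atTop_iff_nat 1).2 (tendsto_greenTrunc hd x)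
  simp only [greenTrunc_succ] at hshift
  exact tendsto_nhds_unique hshift (tendsto_const_nhds.add (tendsto_avg (tendsto_greenTrunc hd) x))

theorem one_le_green_zero (hd : 3 ≤ d) : 1 ≤ green d 0 := by
  simpa [greenTrunc, heatKernel_zero] using greenTrunc_le_green hd 1 0

theorem green_unitStep (hd : 3 ≤ d) (p : Fin d × ℤˣ) : green d (unitStep p) = green d 0 - 1 := by
  have : NeZero d := ⟨by lia⟩
  have havg : avg (green d) 0 = green d (unitStep p) :=
    avg_eq_of_forall fun q => by rw [zero_add, green_unitStep_eq q p]
  rw [green_eq_ite_add_avg hd 0, if_pos rfl, havg, add_sub_cancel_left]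

theorem green_le_green_zero_sub_one (hd : 3 ≤ d) {x : Pt d} (hx : x ≠ 0) :
    green d x ≤ green d 0 - 1 := by
  have : NeZero d := ⟨by lia⟩
  refine green_le_of_greenTrunc_le hd fun T => ?_
  induction T generalizing x with
  | zero => simpa [greenTrunc_zero] using one_le_green_zero hd
  | succ T ih =>
    by_cases hstep : ∃ p, unitStep p = x
    · obtain ⟨p, rfl⟩ := hstep
      exact (greenTrunc_le_green hd _ _).trans_eq (green_unitStep hd p)
    · rw [greenTrunc_succ, if_neg hx, zero_add]
      refine avg_le_of_forall_le fun ⟨i, ε⟩ => ih fun hzero => hstep ⟨(i, -ε), ?_⟩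
      rw [unitStep_neg, eq_neg_of_add_eq_zero_left hzero]

theorem exists_green_le_dist0_rpow (hd : 3 ≤ d) :
    ∃ K : ℝ, 0 < K ∧ ∀ x y : Pt d, x ≠ y → green d (x - y) ≤ K * dist0 d x y ^ ((2 : ℝ) - d) := by
  have hd' : (3 : ℝ) ≤ d := by exact_mod_cast hd
  obtain ⟨K, a, hK, ha, hle⟩ := exists_greenTrunc_le_radialPow (d := d) (m := ((d : ℝ) - 2) / 2)
    (by linarith) (by linarith)
  refine ⟨K, hK, fun x y hxy => green_le_of_greenTrunc_le hd fun T => (hle T _).trans ?_⟩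
  have hpos := dist0_pos hxy
  refine mul_le_mul_of_nonneg_left ?_ hK.le
  calc (normSq (x - y) + a) ^ (-(((d : ℝ) - 2) / 2))
      ≤ (dist0 d x y ^ 2) ^ (-(((d : ℝ) - 2) / 2)) := by
        rw [← normSq_sub]
        refine Real.rpow_le_rpow_of_nonpos ?_ (by linarith) (by linarith)
        rw [normSq_sub]
        positivity
    _ = dist0 d x y ^ ((2 : ℝ) - d) := by
        rw [← Real.rpow_natCast_mul hpos.le]
        congr 1
        push_cast
        ring

end Green

section Escape

/-- The probability that the walk started at `z` avoids `A` at all times `0, …, T`. -/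
noncomputable def avoidProb (A : Set (Pt d)) (T : ℕ) (z : Pt d) : ℝ :=
  prob d T fun s => ∀ t ≤ T, wpos d z s t ∉ A

theorem prob_forall_one_le_notMem (A : Set (Pt d)) (x : Pt d) (T : ℕ) :
    prob d (T + 1) (fun s => ∀ t, 1 ≤ t → t ≤ T + 1 → wpos d x s t ∉ A) =
      avg (avoidProb A T) x := by
  rw [prob_succ, avg_apply]
  refine congrArg (· / _) (Finset.sum_congr rfl fun p _ =>
    congrArg (prob d T) (funext fun s => propext ?_))
  refine ⟨fun h t ht => ?_, fun h t ht htT => ?_⟩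
  · simpa only [wpos_cons_succ] using h (t + 1) (by lia) (by lia)
  · obtain ⟨t, rfl⟩ := Nat.exists_eq_add_of_le' ht
    rw [wpos_cons_succ]
    exact h t (by lia)

theorem avoidProb_succ {A : Set (Pt d)} {z : Pt d} (hz : z ∉ A) (T : ℕ) :
    avoidProb A (T + 1) z = avg (avoidProb A T) z := by
  rw [← prob_forall_one_le_notMem, avoidProb]
  congr! 2 with s
  refine ⟨fun h t _ ht => h t ht, fun h t ht => ?_⟩
  obtain rfl | hpos := t.eq_zero_or_pos
  exacts [(wpos_zero z s).symm ▸ hz, h t hpos ht]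

theorem avoidProb_zero {A : Set (Pt d)} {z : Pt d} (hz : z ∉ A) : avoidProb A 0 z = 1 := by
  classical
  rw [avoidProb, prob_zero, if_pos]
  intro t ht
  rwa [Nat.le_zero.1 ht, wpos_zero]

section Comparison

variable [NeZero d] {A : Set (Pt d)} {w : Pt d → ℝ}

theorem one_sub_le_avoidProb (hw0 : ∀ z, 0 ≤ w z) (hwA : ∀ z ∈ A, 1 ≤ w z)
    (hw : ∀ z ∉ A, avg w z ≤ w z) (T : ℕ) (z : Pt d) : 1 - w z ≤ avoidProb A T z := by
  induction T generalizing z with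
  | zero =>
    by_cases hz : z ∈ A
    · exact (sub_nonpos.2 (hwA z hz)).trans (prob_nonneg _ _)
    · exact (sub_le_self 1 (hw0 z)).trans_eq (avoidProb_zero hz).symm
  | succ T ih =>
    by_cases hz : z ∈ A
    · exact (sub_nonpos.2 (hwA z hz)).trans (prob_nonneg _ _)
    · calc 1 - w z ≤ 1 - avg w z := sub_le_sub_left (hw z hz) 1
        _ = avg (fun y => 1 - w y) z := (avg_one_sub w z).symm
        _ ≤ avg (avoidProb A T) z := avg_le_avg fun p => ih _
        _ = avoidProb A (T + 1) z := (avoidProb_succ hz T).symm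

theorem one_sub_avg_le_esc (hw0 : ∀ z, 0 ≤ w z) (hwA : ∀ z ∈ A, 1 ≤ w z)
    (hw : ∀ z ∉ A, avg w z ≤ w z) {x : Pt d} (hx : x ∈ A) : 1 - avg w x ≤ esc d A x := by
  classical
  rw [esc, if_pos hx]
  refine le_ciInf fun T => ?_
  cases T with
  | zero =>
    have havg : 0 ≤ avg w x :=
      (avg_eq_of_forall (f := fun _ => 0) fun _ => rfl).symm.trans_le (avg_le_avg fun p => hw0 _)
    rw [prob_zero, if_pos fun t h1 h0 => absurd (h1.trans h0) (by lia)]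
    linarith
  | succ T =>
    rw [prob_forall_one_le_notMem, ← avg_one_sub]
    exact avg_le_avg fun p => one_sub_le_avoidProb hw0 hwA hw T _

end Comparison

/-- The Green potential of the counting measure on `A`, the expected number of visits to `A` of
the walk started at `z`. -/
noncomputable def greenPotential (A : Finset (Pt d)) (z : Pt d) : ℝ := ∑ y ∈ A, green d (z - y)

theorem greenPotential_nonneg (A : Finset (Pt d)) (z : Pt d) : 0 ≤ greenPotential A z :=
  Finset.sum_nonneg fun _ _ => green_nonneg _

theorem greenPotential_eq_add_erase {A : Finset (Pt d)} {x : Pt d} (hx : x ∈ A) :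
    greenPotential A x = green d 0 + ∑ y ∈ A.erase x, green d (x - y) := by
  rw [greenPotential, ← Finset.add_sum_erase A _ hx, sub_self]

theorem green_zero_le_greenPotential {A : Finset (Pt d)} {x : Pt d} (hx : x ∈ A) :
    green d 0 ≤ greenPotential A x := by
  rw [greenPotential_eq_add_erase hx]
  exact le_add_of_nonneg_right (Finset.sum_nonneg fun _ _ => green_nonneg _)

theorem greenPotential_eq_ite_add_avg (hd : 3 ≤ d) (A : Finset (Pt d)) (z : Pt d) :
    greenPotential A z = (if z ∈ A then 1 else 0) + avg (greenPotential A) z := by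
  have hsum : greenPotential A = ∑ y ∈ A, fun z => green d (z - y) := (Finset.sum_fn _ _).symm
  rw [hsum, map_sum, Finset.sum_apply, Finset.sum_apply, ← Finset.sum_ite_eq A z fun _ => (1 : ℝ),
    ← Finset.sum_add_distrib]
  refine Finset.sum_congr rfl fun y _ => ?_
  rw [avg_comp_sub_right, green_eq_ite_add_avg hd (z - y)]
  simp only [sub_eq_zero]

theorem one_sub_sum_green_div_le_esc (hd : 3 ≤ d) {A : Finset (Pt d)} {x : Pt d} (hx : x ∈ A) :
    (1 - ∑ y ∈ A.erase x, green d (x - y)) / green d 0 ≤ esc d A x := by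
  have : NeZero d := ⟨by lia⟩
  have hG : 0 < green d 0 := zero_lt_one.trans_le (one_le_green_zero hd)
  let w : Pt d → ℝ := (green d 0)⁻¹ • greenPotential A
  have havg (z : Pt d) : avg w z = (green d 0)⁻¹ * avg (greenPotential A) z := by
    rw [map_smul, Pi.smul_apply, smul_eq_mul]
  have hw0 (z : Pt d) : 0 ≤ w z := mul_nonneg (inv_nonneg.2 hG.le) (greenPotential_nonneg A z)
  have hwA (z : Pt d) (hz : z ∈ (A : Set (Pt d))) : 1 ≤ w z :=
    (le_inv_mul_iff₀ hG).2 (by simpa using green_zero_le_greenPotential hz)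
  have hw (z : Pt d) (hz : z ∉ (A : Set (Pt d))) : avg w z ≤ w z := by
    have hharm : greenPotential A z = avg (greenPotential A) z := by
      rw [greenPotential_eq_ite_add_avg hd, if_neg (mt Finset.mem_coe.2 hz), zero_add]
    exact (havg z).trans_le (congrArg _ hharm).ge
  refine le_of_eq_of_le ?_ (one_sub_avg_le_esc hw0 hwA hw hx)
  have hstep := greenPotential_eq_ite_add_avg hd A x
  rw [if_pos hx, greenPotential_eq_add_erase hx] at hstep
  rw [havg, ← sub_eq_of_eq_add' hstep]
  field_simp
  ring

end Escape

section Clusters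

theorem sum_green_erase_le (hd : 3 ≤ d) {A : Finset (Pt d)} {x : Pt d} (hx : x ∈ A) {m : ℕ}
    (hm : A.card ≤ m) :
    ∑ y ∈ A.erase x, green d (x - y) ≤ (m - 1) * (green d 0 - 1) := by
  have hcard : ((A.erase x).card : ℝ) ≤ m - 1 := by
    rw [Finset.cast_card_erase_of_mem hx]
    exact sub_le_sub_right (Nat.cast_le.2 hm) 1
  calc ∑ y ∈ A.erase x, green d (x - y)
      ≤ (A.erase x).card • (green d 0 - 1) := Finset.sum_le_card_nsmul _ _ _ fun y hy =>
        green_le_green_zero_sub_one hd (sub_ne_zero.2 (Finset.ne_of_mem_erase hy).symm)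
    _ = (A.erase x).card * (green d 0 - 1) := nsmul_eq_mul _ _
    _ ≤ (m - 1) * (green d 0 - 1) :=
        mul_le_mul_of_nonneg_right hcard (sub_nonneg.2 (one_le_green_zero hd))

theorem exists_sum_green_others_le (hd : 3 ≤ d) :
    ∃ K : ℝ, 0 < K ∧ ∀ {k : ℕ} [Nontrivial (Fin k)] {U : Conf d} {C : Fin k → Finset (Pt d)},
      IsClusteringOf d C U → ∀ {i : Fin k} {x : Pt d}, x ∈ C i →
        ∑ y ∈ others d C i, green d (x - y) ≤ K * U.card * sep d C ^ ((2 : ℝ) - d) := by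
  have hd' : (3 : ℝ) ≤ d := by exact_mod_cast hd
  obtain ⟨K, hK, hdecay⟩ := exists_green_le_dist0_rpow hd
  refine ⟨K, hK, fun {k _ U C} hC {i x} hx => ?_⟩
  have hgreen (y : Pt d) (hy : y ∈ others d C i) :
      green d (x - y) ≤ K * sep d C ^ ((2 : ℝ) - d) := by
    have hxy : x ≠ y := Finset.disjoint_iff_ne.1 (hC.disjoint_others i) x hx y hy
    exact (hdecay x y hxy).trans <| mul_le_mul_of_nonneg_left
      (Real.rpow_le_rpow_of_nonpos hC.sep_pos (sep_le_dist0 hx hy) (by linarith)) hK.le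
  have hcard : ((others d C i).card : ℝ) ≤ U.card :=
    Nat.cast_le.2 (Finset.card_le_card (hC.union_others i ▸ Finset.subset_union_right))
  have hterm : 0 ≤ K * sep d C ^ ((2 : ℝ) - d) :=
    mul_nonneg hK.le (Real.rpow_nonneg hC.sep_pos.le _)
  calc ∑ y ∈ others d C i, green d (x - y)
      ≤ (others d C i).card * (K * sep d C ^ ((2 : ℝ) - d)) :=
        (Finset.sum_le_card_nsmul _ _ _ hgreen).trans_eq (nsmul_eq_mul _ _)
    _ ≤ U.card * (K * sep d C ^ ((2 : ℝ) - d)) := mul_le_mul_of_nonneg_right hcard hterm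
    _ = K * U.card * sep d C ^ ((2 : ℝ) - d) := by ring

end Clusters

theorem min_esc_general (d : ℕ) (hd : 3 ≤ d) :
    ∃ c : ℝ, 0 < c ∧
      ∀ (k m : ℕ), 2 ≤ k → ∀ (U : Conf d) (C : Fin k → Finset (Pt d)), IsClusteringOf d C U →
        ∀ i, (C i).card ≤ m → ∀ x ∈ C i,
          (m - (m - 1) * green d 0) / green d 0 - c * U.card * sep d C ^ ((2 : ℝ) - d) ≤
            esc d ↑U x := by
  obtain ⟨K, hK, hfar⟩ := exists_sum_green_others_le hd
  refine ⟨K, hK, fun k m hk U C hC i hm x hx => ?_⟩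
  have : Nontrivial (Fin k) := Fin.nontrivial_iff_two_le.2 hk
  have hG := one_le_green_zero hd
  have hsum : ∑ y ∈ U.erase x, green d (x - y) ≤
      (m - 1) * (green d 0 - 1) + K * U.card * sep d C ^ ((2 : ℝ) - d) :=
    (hC.sum_erase hx _).trans_le (add_le_add (sum_green_erase_le hd hx hm) (hfar hC hx))
  have hfar0 : 0 ≤ K * U.card * sep d C ^ ((2 : ℝ) - d) :=
    mul_nonneg (by positivity) (Real.rpow_nonneg hC.sep_pos.le _)
  calc (m - (m - 1) * green d 0) / green d 0 - K * U.card * sep d C ^ ((2 : ℝ) - d)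
      ≤ (m - (m - 1) * green d 0) / green d 0 -
          K * U.card * sep d C ^ ((2 : ℝ) - d) / green d 0 :=
        sub_le_sub_left (div_le_self hfar0 hG) _
    _ = (1 - ((m - 1) * (green d 0 - 1) + K * U.card * sep d C ^ ((2 : ℝ) - d))) / green d 0 := by
        ring
    _ ≤ (1 - ∑ y ∈ U.erase x, green d (x - y)) / green d 0 :=
        div_le_div_of_nonneg_right (sub_le_sub_left hsum 1) (by linarith)
    _ ≤ esc d ↑U x :=
        one_sub_sum_green_div_le_esc hd (hC.union_others i ▸ Finset.mem_union_left _ hx)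

/-- **Escape probability lower bound.** Let `d ≥ 3`. There is `c = c(d) > 0` such that if
`C = (C¹, C²)` is a clustering of an `n`-element configuration `U ⊂ ℤ^d` with `|C¹| ≤ 3`,
then `esc_U(x) ≥ (3 − 2G_d(o))/G_d(o) − c n sep(C)^{2−d}` for every `x ∈ C¹`. -/
theorem min_esc (d : ℕ) (hd : 3 ≤ d) :
    ∃ c : ℝ, 0 < c ∧
      ∀ (n : ℕ) (U : Conf d), U.card = n →
        ∀ C1 C2 : Finset (Pt d),
          IsClusteringOf d ![C1, C2] U → C1.card ≤ 3 →
          ∀ x ∈ C1,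
            (3 - 2 * green d 0) / green d 0 -
                c * (n : ℝ) * sep d ![C1, C2] ^ ((2 : ℝ) - (d : ℝ)) ≤
              esc d (↑U) x := by
  obtain ⟨c, hc, hesc⟩ := min_esc_general d hd
  refine ⟨c, hc, fun n U hn C1 C2 hC hcard x hx => ?_⟩
  simpa [hn, show (3 : ℝ) - 1 = 2 by norm_num] using hesc 2 3 le_rfl U _ hC 0 hcard x hx

end HATFormal
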